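/- Let χ : K^× → ℤ/2ℤ be a group homomorphism and n ≥ 1 an integer such that χ vanishes on U_{n+1} but does not vanish identically on U_n. Suppose 1 ≤ v(e₁ − e₂) ≤ 2n − 1 and χ(e₁) = χ(e₂) = 0. Then there exists x ∈ K ∖ {0, e₁, e₂} with χ(x) = 1 and χ(x − e₁) + χ(x − e₂) = 1; in particular χ(x(x−e₁)(x−e₂)) = 0. -/

import Mathlib

/-- An additively written, normalized (i.e. surjective onto `ℤ`) discrete
valuation on a field `K`.  All axioms are imposed at nonzero arguments only,
so the value of `v` at `0` is irrelevant.  For a finite extension `K` of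
`ℚ_[p]`, the normalized valuation `v : K^× → ℤ` of the paper is such a
structure. -/
structure DValuation (K : Type*) [Field K] where
  /-- the valuation map -/
  v : K → ℤ
  v_mul : ∀ ⦃x y : K⦄, x ≠ 0 → y ≠ 0 → v (x * y) = v x + v y
  min_le_v_add : ∀ ⦃x y : K⦄, x ≠ 0 → y ≠ 0 → x + y ≠ 0 → min (v x) (v y) ≤ v (x + y)
  v_surj : ∀ m : ℤ, ∃ x : K, x ≠ 0 ∧ v x = m

namespace DValuation

variable {K : Type*} [Field K] (w : DValuation K)

/-- `u ∈ U_m` : `u` is (a unit) congruent to `1` modulo `𝔭^m`; for `m ≥ 1`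
this forces `v u = 0`, i.e. `u ∈ 𝔬^×`. -/
def IsUnit₁ (m : ℤ) (u : K) : Prop :=
  u = 1 ∨ m ≤ w.v (u - 1)

end DValuation

namespace DValuation

variable {K : Type*} [Field K] (w : DValuation K)

theorem v_one' : w.v 1 = 0 := by
  have h := w.v_mul (one_ne_zero (α := K)) one_ne_zero
  rw [mul_one] at h; omega

theorem v_neg_one' : w.v (-1) = 0 := by
  have h0 : (-1 : K) ≠ 0 := neg_ne_zero.mpr one_ne_zero
  have h := w.v_mul h0 h0
  rw [neg_mul_neg, mul_one, w.v_one'] at h; omega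

theorem v_neg' (x : K) (hx : x ≠ 0) : w.v (-x) = w.v x := by
  have h0 : (-1 : K) ≠ 0 := neg_ne_zero.mpr one_ne_zero
  have h := w.v_mul h0 hx
  rw [neg_one_mul, w.v_neg_one'] at h; omega

theorem v_div' (x y : K) (hx : x ≠ 0) (hy : y ≠ 0) : w.v (x / y) = w.v x - w.v y := by
  have h := w.v_mul (div_ne_zero hx hy) hy
  rw [div_mul_cancel₀ _ hy] at h; omega

theorem add_ne_zero' (x y : K) (hx : x ≠ 0) (h : w.v x < w.v y) : x + y ≠ 0 := by
  intro h0
  have : y = -x := by linear_combination h0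
  rw [this, w.v_neg' x hx] at h; omega

theorem v_add_eq' (x y : K) (hx : x ≠ 0) (hy : y ≠ 0) (h : w.v x < w.v y) :
    w.v (x + y) = w.v x := by
  have h0 := w.add_ne_zero' x y hx h
  have h1 := w.min_le_v_add hx hy h0
  have h2 := w.min_le_v_add h0 (neg_ne_zero.mpr hy) (by simpa using hx)
  rw [w.v_neg' y hy, add_neg_cancel_right] at h2
  omega

theorem isUnit₁_ne (m : ℤ) (hm : 1 ≤ m) (u : K) (hu : w.IsUnit₁ m u) : u ≠ 0 ∧ w.v u = 0 := by
  by_cases h1 : u = 1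
  · subst h1; exact ⟨one_ne_zero, w.v_one'⟩
  · have h2 : m ≤ w.v (u - 1) := hu.resolve_left h1
    have h3 : w.v 1 < w.v (u - 1) := by rw [w.v_one']; omega
    have h4 := w.add_ne_zero' 1 (u - 1) one_ne_zero h3
    have h5 := w.v_add_eq' 1 (u - 1) one_ne_zero (sub_ne_zero.mpr h1) h3
    rw [add_sub_cancel, w.v_one'] at h5
    rw [add_sub_cancel] at h4
    exact ⟨h4, h5⟩

end DValuation

/-- The construction in case (iii) of Proposition 4 when
`1 ≤ v(e₁−e₂) ≤ 2n−1`:  `χ : K^× → ℤ/2ℤ` a homomorphism vanishing on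
`U_{n+1}` but not identically on `U_n` (`n ≥ 1`); `e₁, e₂` distinct `1`-units
with `1 ≤ v(e₁−e₂) ≤ 2n−1` and `χ(e₁) = χ(e₂) = 0`.  Then there is
`x ∈ K ∖ {0, e₁, e₂}` with `χ(x) = 1` and `χ(x−e₁) + χ(x−e₂) = 1`; in
particular `χ(x(x−e₁)(x−e₂)) = 0`. -/
theorem chatelet_case_iii_small_valuation
    (K : Type*) [Field K] [Algebra ℚ_[2] K] [FiniteDimensional ℚ_[2] K]
    (w : DValuation K)
    (hext : ∀ x : ℚ_[2], x ≠ 0 →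
      w.v (algebraMap ℚ_[2] K x) = w.v (algebraMap ℚ_[2] K 2) * x.valuation)
    (χ : K → ZMod 2)
    (hχ : ∀ ⦃x y : K⦄, x ≠ 0 → y ≠ 0 → χ (x * y) = χ x + χ y)
    (n : ℕ) (hn : 1 ≤ n)
    (hvan : ∀ u : K, w.IsUnit₁ ((n : ℤ) + 1) u → χ u = 0)
    (hnonvan : ∃ u : K, w.IsUnit₁ (n : ℤ) u ∧ χ u ≠ 0)
    (e₁ e₂ : K) (he₁ : w.IsUnit₁ 1 e₁) (he₂ : w.IsUnit₁ 1 e₂) (hee : e₁ ≠ e₂)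
    (hval₁ : 1 ≤ w.v (e₁ - e₂)) (hval₂ : w.v (e₁ - e₂) ≤ 2 * (n : ℤ) - 1)
    (hχe₁ : χ e₁ = 0) (hχe₂ : χ e₂ = 0) :
    ∃ x : K, x ≠ 0 ∧ x ≠ e₁ ∧ x ≠ e₂ ∧
      χ x = 1 ∧ χ (x - e₁) + χ (x - e₂) = 1 ∧
      χ (x * (x - e₁) * (x - e₂)) = 0 := by
  have h11 : ∀ a : ZMod 2, a ≠ 0 → a = 1 := by decide
  have haa : ∀ a : ZMod 2, a + 1 + a = 1 := by decide
  have h12 : (1 : ZMod 2) + 1 = 0 := by decide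
  have hn' : (1 : ℤ) ≤ n := by exact_mod_cast hn
  obtain ⟨u, hu, hχu⟩ := hnonvan
  obtain ⟨hu0, hvu⟩ := w.isUnit₁_ne n hn' u hu
  obtain ⟨he20, hve2⟩ := w.isUnit₁_ne 1 le_rfl e₂ he₂
  have hu1 : u ≠ 1 := fun h => hχu (hvan u (Or.inl h))
  have hnu : ¬ ((n : ℤ) + 1 ≤ w.v (u - 1)) := fun h => hχu (hvan u (Or.inr h))
  have hnu2 : (n : ℤ) ≤ w.v (u - 1) := hu.resolve_left hu1
  have hχu1 := h11 _ hχu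
  obtain ⟨t, ht⟩ : ∃ t, t = u - 1 := ⟨_, rfl⟩
  have ht0 : t ≠ 0 := by rw [ht]; exact sub_ne_zero.mpr hu1
  have hvt : w.v t = n := by rw [ht]; omega
  have hd0 : e₂ - e₁ ≠ 0 := sub_ne_zero.mpr hee.symm
  have hvd : w.v (e₂ - e₁) = w.v (e₁ - e₂) := by
    rw [← w.v_neg' _ hd0, neg_sub]
  obtain ⟨y0, hy0⟩ : ∃ y, y = (e₂ - e₁) / t := ⟨_, rfl⟩
  have hy00 : y0 ≠ 0 := by rw [hy0]; exact div_ne_zero hd0 ht0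
  have hvy0 : w.v y0 = w.v (e₁ - e₂) - n := by
    rw [hy0, w.v_div' _ _ hd0 ht0, hvd, hvt]
  have hyt : y0 * t = e₂ - e₁ := by rw [hy0, div_mul_cancel₀ _ ht0]
  -- the key reduction
  suffices hx : ∃ x d : K, x ≠ 0 ∧ χ x = 1 ∧ x = e₂ + y0 + d ∧ (d = 0 ∨ w.v y0 + 1 ≤ w.v d) by
    obtain ⟨x, d, hx0, hχx, hxd, hd⟩ := hx
    have hne1 : x ≠ e₁ := by rintro rfl; rw [hχx] at hχe₁; exact one_ne_zero hχe₁
    have hne2 : x ≠ e₂ := by rintro rfl; rw [hχx] at hχe₂; exact one_ne_zero hχe₂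
    have hy : x - e₂ ≠ 0 := sub_ne_zero.mpr hne2
    have hz : x - e₁ ≠ 0 := sub_ne_zero.mpr hne1
    have hsum : χ (x - e₁) + χ (x - e₂) = 1 := by
      obtain ⟨q, hq⟩ : ∃ q, q = 1 - t * d / ((x - e₂) * u) := ⟨_, rfl⟩
      have hfac : x - e₁ = (x - e₂) * u * q := by
        rw [hq, mul_sub, mul_div_cancel₀ _ (mul_ne_zero hy hu0)]
        have : u = 1 + t := by rw [ht]; ring
        rw [this, hxd]; linear_combination -hyt
      have hqU : w.IsUnit₁ ((n : ℤ) + 1) q := by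
        rcases eq_or_ne d 0 with h0 | h0
        · left; rw [hq, h0]; simp
        · right
          have hd := hd.resolve_left h0
          have hvy : w.v (x - e₂) = w.v y0 := by
            rw [show x - e₂ = y0 + d by rw [hxd]; ring]
            exact w.v_add_eq' _ _ hy00 h0 (by omega)
          have : q - 1 = -(t * d / ((x - e₂) * u)) := by rw [hq]; ring
          rw [this, w.v_neg' _ (div_ne_zero (mul_ne_zero ht0 h0) (mul_ne_zero hy hu0)),
            w.v_div' _ _ (mul_ne_zero ht0 h0) (mul_ne_zero hy hu0), w.v_mul ht0 h0,
            w.v_mul hy hu0]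
          omega
      have hq0 := (w.isUnit₁_ne _ (by omega) q hqU).1
      rw [hfac, hχ (mul_ne_zero hy hu0) hq0, hχ hy hu0, hvan q hqU, hχu1, add_zero]
      exact haa _
    refine ⟨x, hx0, hne1, hne2, hχx, hsum, ?_⟩
    rw [hχ (mul_ne_zero hx0 hz) hy, hχ hx0 hz, add_assoc, hsum, hχx]
    exact h12
  rcases eq_or_ne (e₂ + y0) 0 with h0 | h0
  · have hvy : w.v y0 = 0 := by
      rw [show y0 = -e₂ by linear_combination h0, w.v_neg' _ he20, hve2]
    obtain ⟨p, hp0, hp⟩ := w.v_surj 1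
    by_cases hχp : χ p = 0
    · refine ⟨p * u, p * u, mul_ne_zero hp0 hu0, ?_, by rw [h0, zero_add], Or.inr ?_⟩
      · rw [hχ hp0 hu0, hχp, hχu1, zero_add]
      · rw [w.v_mul hp0 hu0]; omega
    · exact ⟨p, p, hp0, h11 _ hχp, by rw [h0, zero_add], Or.inr (by omega)⟩
  · by_cases hχx : χ (e₂ + y0) = 0
    · refine ⟨(e₂ + y0) * u, (e₂ + y0) * t, mul_ne_zero h0 hu0, ?_, ?_, Or.inr ?_⟩
      · rw [hχ h0 hu0, hχx, hχu1, zero_add]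
      · rw [ht]; ring
      · have := w.min_le_v_add he20 hy00 h0
        rw [w.v_mul h0 ht0]; omega
    · exact ⟨_, 0, h0, h11 _ hχx, by rw [add_zero], Or.inl rfl⟩
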